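/- arXiv:math/0509430 — 2 statements merged into one kernel-verified Lean document; each statement's English description precedes it below -/
import Mathlib

section
/- Lemma 3.1 (generalized Cauchy–Schwarz inequality). Let g ≥ 2 be an integer; for each i = 1,…,g let v_i ≥ 1 and let ℓ_{ij} (j = 1,…,v_i) be nonnegative integers; let X^{(i)} be a real array with entries X^{(i)}_{m_{i1}…m_{iv_i}} indexed by integers m_{ij} with −ℓ_{ij} ≤ m_{ij} ≤ ℓ_{ij}. Let γ̃ be a partition into pairs of the index set T̃ = {(i,j) : 1 ≤ i ≤ g, 1 ≤ j ≤ v_i} with no flat edges, i.e. no pair of γ̃ has both elements in the same row i. Then Σ over all assignments (m_{ij}) satisfying m_{ij} + m_{i′j′} = 0 for every pair {(i,j),(i′,j′)} ∈ γ̃ of the product ∏_{i=1}^{g} |X^{(i)}_{m_{i1}…m_{iv_i}}| is at most ∏_{i=1}^{g} ‖X^{(i)}‖, where ‖X^{(i)}‖ := ( Σ over all admissible (m_{i1},…,m_{iv_i}) of (X^{(i)}_{m_{i1}…m_{iv_i}})² )^{1/2} is the Euclidean norm of the array X^{(i)}. -/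
noncomputable section

open Classical in
theorem aux_one {ι : Type} [Fintype ι] (a b : ι) (hab : a ≠ b) (R : Finset ℤ)
    (f : ι → ℤ → ℝ) (hf : ∀ i t, 0 ≤ f i t) :
    ∑ t ∈ R, ∏ i, f i (if i = a ∨ i = b then t else 0) ≤
      ∏ i, Real.sqrt (∑ t ∈ (if i = a ∨ i = b then R else {0}), f i t ^ 2) := by
  have key : ∀ h : ι → ℝ, ∏ i, h i = h a * h b * ∏ i ∈ (Finset.univ.erase a).erase b, h i := by
    intro h
    rw [← Finset.mul_prod_erase Finset.univ h (Finset.mem_univ a),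
      ← Finset.mul_prod_erase (Finset.univ.erase a) h (a := b) (by simp [hab.symm]), mul_assoc]
  have e1 : ∀ t, ∏ i, f i (if i = a ∨ i = b then t else 0) =
      f a t * f b t * ∏ i ∈ (Finset.univ.erase a).erase b, f i 0 := by
    intro t
    rw [key]
    congr 1
    · simp
    · apply Finset.prod_congr rfl
      intro i hi
      simp only [Finset.mem_erase, Finset.mem_univ, and_true] at hi
      simp [hi.1, hi.2]
  have e2 : ∏ i, Real.sqrt (∑ t ∈ (if i = a ∨ i = b then R else {0}), f i t ^ 2) =
      Real.sqrt (∑ t ∈ R, f a t ^ 2) * Real.sqrt (∑ t ∈ R, f b t ^ 2) *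
        ∏ i ∈ (Finset.univ.erase a).erase b, f i 0 := by
    rw [key]
    congr 1
    · simp
    · apply Finset.prod_congr rfl
      intro i hi
      simp only [Finset.mem_erase, Finset.mem_univ, and_true] at hi
      simp [hi.1, hi.2, Real.sqrt_sq (hf i 0)]
  rw [e2]
  simp_rw [e1]
  rw [← Finset.sum_mul]
  exact mul_le_mul_of_nonneg_right (Real.sum_mul_le_sqrt_mul_sqrt R (f a) (f b))
    (Finset.prod_nonneg fun i _ => hf i 0)

theorem aux_cons (n : ℕ) (R : Fin (n+1) → Finset ℤ) (f : (Fin (n+1) → ℤ) → ℝ) :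
    ∑ z ∈ Fintype.piFinset R, f z =
      ∑ z ∈ Fintype.piFinset (fun k => R (Fin.succ k)), ∑ t ∈ R 0, f (Fin.cons t z) := by
  rw [Finset.sum_comm, ← Finset.sum_product']
  symm
  refine Finset.sum_bij (fun p _ => (Fin.cons p.1 p.2 : Fin (n+1) → ℤ)) ?_ ?_ ?_ ?_
  · rintro ⟨t, z⟩ h
    simp only [Finset.mem_product, Fintype.mem_piFinset] at h ⊢
    intro k
    refine Fin.cases ?_ ?_ k
    · simpa using h.1
    · intro k; simpa using h.2 k
  · rintro ⟨t, z⟩ _ ⟨t', z'⟩ _ h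
    have := Fin.cons_inj.1 h
    exact Prod.ext this.1 this.2
  · intro z hz
    rw [Fintype.mem_piFinset] at hz
    refine ⟨(z 0, Fin.tail z), ?_, Fin.cons_self_tail z⟩
    simp only [Finset.mem_product, Fintype.mem_piFinset]
    exact ⟨hz 0, fun k => hz k.succ⟩
  · intros; rfl

open Classical in
theorem aux_many {ι : Type} [Fintype ι] (n : ℕ) : ∀ (a b : Fin n → ι) (_ : ∀ k, a k ≠ b k)
    (R : Fin n → Finset ℤ)
    (F : ι → (Fin n → ℤ) → ℝ) (_ : ∀ i z, 0 ≤ F i z),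
    ∑ z ∈ Fintype.piFinset R, ∏ i, F i (fun k => if i = a k ∨ i = b k then z k else 0) ≤
      ∏ i, Real.sqrt (∑ z ∈ Fintype.piFinset
        (fun k => if i = a k ∨ i = b k then R k else {0}), F i z ^ 2) := by
  induction n with
  | zero =>
    intro a b hab R F hF
    have e : ∀ R : Fin 0 → Finset ℤ, Fintype.piFinset R = {Fin.elim0} := by
      intro R
      ext z
      rw [Fintype.mem_piFinset, Finset.mem_singleton]
      exact ⟨fun _ => Subsingleton.elim _ _, fun _ k => k.elim0⟩
    simp only [e, Finset.sum_singleton, Real.sqrt_sq (hF _ _)]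
    apply le_of_eq
    apply Finset.prod_congr rfl
    intro i _
    congr 1
    exact Subsingleton.elim _ _
  | succ n ih =>
    intro a b hab R F hF
    rw [aux_cons]
    have ih' := ih (fun k => a k.succ) (fun k => b k.succ) (fun k => hab _) (fun k => R k.succ)
      (fun i z => Real.sqrt (∑ t ∈ (if i = a 0 ∨ i = b 0 then R 0 else {0}),
        F i (Fin.cons t z) ^ 2)) (fun i z => Real.sqrt_nonneg _)
    refine le_trans (Finset.sum_le_sum ?_) (ih'.trans (le_of_eq ?_))
    · intro z _
      refine le_trans (le_of_eq ?_) (aux_one (a 0) (b 0) (hab 0) (R 0)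
        (fun i t => F i (Fin.cons t
          (fun k => if i = a k.succ ∨ i = b k.succ then z k else 0))) (fun i t => hF _ _))
      refine Finset.sum_congr rfl fun t _ => Finset.prod_congr rfl fun i _ => ?_
      congr 1
      funext k
      refine Fin.cases ?_ ?_ k
      · simp
      · intro k; simp
    · refine Finset.prod_congr rfl fun i _ => ?_
      congr 1
      rw [aux_cons]
      refine Finset.sum_congr rfl fun z _ => ?_
      rw [Real.sq_sqrt (Finset.sum_nonneg fun _ _ => sq_nonneg _)]

theorem aux_rep {T : Type} [Finite T] (π : T → T) (hinv : Function.Involutive π) :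
    ∃ (n : ℕ) (ε : Fin n → T) (idx : T → Fin n),
      (∀ x, x = ε (idx x) ∨ x = π (ε (idx x))) ∧ (∀ k, idx (ε k) = k) ∧
      (∀ k, idx (π (ε k)) = k) := by
  let s : Setoid T :=
    { r := fun x y => x = y ∨ x = π y
      iseqv := ⟨fun x => Or.inl rfl, by
        rintro x y (h | h)
        · exact Or.inl h.symm
        · right; rw [h, hinv], by
        rintro x y z (h | h) (h' | h')
        · exact Or.inl (h.trans h')
        · right; rw [h, h']
        · right; rw [h, h']
        · left; rw [h, h', hinv]⟩ }
  obtain ⟨n, ⟨e⟩⟩ := Finite.exists_equiv_fin (Quotient s)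
  refine ⟨n, fun k => (e.symm k).out, fun x => e (Quotient.mk s x), ?_, ?_, ?_⟩
  · intro x
    have : s.r x (e.symm (e (Quotient.mk s x))).out := by
      rw [Equiv.symm_apply_apply]
      exact Quotient.exact (Quotient.out_eq _).symm
    exact this
  · intro k; simp
  · intro k
    have : Quotient.mk s (π (e.symm k).out) = Quotient.mk s ((e.symm k).out) :=
      Quotient.sound (Or.inr rfl)
    simp [this]

theorem aux_inj {α β : Type} (s : Finset α) (t : Finset β) (φ : α → β)
    (f : α → ℝ) (h : β → ℝ) (hm : ∀ x ∈ s, φ x ∈ t)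
    (hi : ∀ x ∈ s, ∀ y ∈ s, φ x = φ y → x = y) (he : ∀ x ∈ s, f x = h (φ x))
    (hn : ∀ y, 0 ≤ h y) : ∑ x ∈ s, f x ≤ ∑ y ∈ t, h y := by
  classical
  rw [Finset.sum_congr rfl he, ← Finset.sum_image (g := φ) (f := h) (fun x hx y hy => hi x hx y hy)]
  exact Finset.sum_le_sum_of_subset_of_nonneg (Finset.image_subset_iff.2 hm) fun y _ _ => hn y


/-- **Lemma 3.1** (generalized Cauchy–Schwarz inequality). Let `X^{(1)}, …, X^{(g)}` be real
arrays, the array `X^{(i)}` having `v i` integer index slots, the `j`-th slot ranging over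
`[-ℓ i j, ℓ i j]`. Let `γ̃` be a partition into pairs of the index set
`T̃ = {(i,j) : i < g, j < v i}` with no flat edges, encoded as a fixed-point-free involution
`π` with `(π x).1 ≠ x.1` for every `x`. Then the sum, over all admissible assignments `m`
with `m x + m (π x) = 0` for every `x`, of `∏ᵢ |X^{(i)}(m i ·)|`, is at most the product of
the Euclidean norms of the arrays. -/
theorem lemma_3_1 (g : ℕ) (hg : 2 ≤ g) (v : Fin g → ℕ) (hv : ∀ i, 1 ≤ v i)
    (ℓ : (i : Fin g) → Fin (v i) → ℕ)
    (X : (i : Fin g) → ((j : Fin (v i)) → ℤ) → ℝ)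
    (π : ((i : Fin g) × Fin (v i)) → ((i : Fin g) × Fin (v i)))
    (hinv : Function.Involutive π)
    (hflat : ∀ x, (π x).1 ≠ x.1) :
    (∑ m ∈ Fintype.piFinset (fun i : Fin g =>
        Fintype.piFinset (fun j : Fin (v i) => Finset.Icc (-(ℓ i j : ℤ)) (ℓ i j))),
      if ∀ x : (i : Fin g) × Fin (v i), m x.1 x.2 + m (π x).1 (π x).2 = 0 then
        ∏ i, |X i (m i)|
      else 0) ≤
      ∏ i, Real.sqrt (∑ mi ∈ Fintype.piFinset
        (fun j : Fin (v i) => Finset.Icc (-(ℓ i j : ℤ)) (ℓ i j)), (X i mi) ^ 2) := by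
  classical
  obtain ⟨n, ε, idx, h1, h2, h3⟩ := aux_rep π hinv
  let L : ((i : Fin g) × Fin (v i)) → Finset ℤ := fun x => Finset.Icc (-(ℓ x.1 x.2 : ℤ)) (ℓ x.1 x.2)
  have Lneg : ∀ x t, t ∈ L x → -t ∈ L x := by
    intro x t h
    simp only [L, Finset.mem_Icc] at h ⊢
    omega
  let M : (Fin n → ℤ) → ((i : Fin g) × Fin (v i)) → ℤ := fun w x =>
    if x = ε (idx x) then w (idx x) else - w (idx x)
  let R : Fin n → Finset ℤ := fun k => L (ε k) ∩ L (π (ε k))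
  have hne : ∀ k, π (ε k) ≠ ε k := fun k h => hflat (ε k) (by rw [h])
  have Mε : ∀ w k, M w (ε k) = w k := by
    intro w k; simp [M, h2]
  have Mπ : ∀ w k, M w (π (ε k)) = - w k := by
    intro w k; simp [M, h3, hne]
  have main := aux_many n (fun k => (ε k).1) (fun k => (π (ε k)).1)
    (fun k => (hflat (ε k)).symm) R (fun i w => |X i (fun j => M w ⟨i, j⟩)|)
    (fun i w => abs_nonneg _)
  have hrow : ∀ i (j : Fin (v i)), i = (ε (idx ⟨i, j⟩)).1 ∨ i = (π (ε (idx ⟨i, j⟩))).1 := by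
    intro i j
    rcases h1 ⟨i, j⟩ with h | h
    · left; exact congrArg Sigma.fst h
    · right; exact congrArg Sigma.fst h
  refine le_trans ?_ (main.trans ?_)
  · rw [← Finset.sum_filter]
    refine aux_inj _ _ (fun m k => m (ε k).1 (ε k).2) _ _ ?_ ?_ ?_
      (fun z => Finset.prod_nonneg fun i _ => abs_nonneg _)
    · intro m hm
      simp only [Finset.mem_filter, Fintype.mem_piFinset] at hm
      rw [Fintype.mem_piFinset]
      intro k
      rw [Finset.mem_inter]
      refine ⟨hm.1 _ _, ?_⟩
      have := Lneg _ _ (hm.1 (π (ε k)).1 (π (ε k)).2)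
      have h' := hm.2 (ε k)
      rwa [show m (ε k).1 (ε k).2 = - m (π (ε k)).1 (π (ε k)).2 by omega]
    · intro m hm m' hm' h
      simp only [Finset.mem_filter] at hm hm'
      have hk : ∀ k, m (ε k).1 (ε k).2 = m' (ε k).1 (ε k).2 := fun k => congrFun h k
      have : ∀ x : (i : Fin g) × Fin (v i), m x.1 x.2 = m' x.1 x.2 := by
        intro x
        have hx := h1 x
        generalize idx x = k at hx
        have a1 := hm.2 (ε k)
        have a2 := hm'.2 (ε k)
        have a3 := hk k
        rcases hx with rfl | rfl
        · exact a3
        · omega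
      funext i j
      exact this ⟨i, j⟩
    · intro m hm
      simp only [Finset.mem_filter] at hm
      refine Finset.prod_congr rfl fun i _ => ?_
      congr 2
      funext j
      have hr := hrow i j
      have hx := h1 ⟨i, j⟩
      have a1 := hm.2 (ε (idx ⟨i, j⟩))
      simp only [M, hr, if_true]
      split_ifs with hc
      · rw [← hc]
      · have hx' := hx.resolve_left hc
        rw [← hx'] at a1
        simp only at a1
        omega
  · refine Finset.prod_le_prod (fun i _ => Real.sqrt_nonneg _) fun i _ => Real.sqrt_le_sqrt ?_
    refine aux_inj _ _ (fun w j => M w ⟨i, j⟩) _ _ ?_ ?_ ?_ (fun y => sq_nonneg _)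
    · intro w hw
      rw [Fintype.mem_piFinset] at hw ⊢
      intro j
      have hk := hw (idx ⟨i, j⟩)
      simp only [hrow i j, if_true, R, Finset.mem_inter] at hk
      have hx := h1 ⟨i, j⟩
      change (if _ then _ else _) ∈ L ⟨i, j⟩
      split_ifs with hc
      · rw [← hc] at hk; exact hk.1
      · rw [← hx.resolve_left hc] at hk; exact Lneg _ _ hk.2
    · intro w hw w' hw' h
      rw [Fintype.mem_piFinset] at hw hw'
      have hj : ∀ x : (i : Fin g) × Fin (v i), i = x.1 → M w x = M w' x := by
        rintro ⟨i', j⟩ hi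
        simp only at hi
        subst hi
        exact congrFun h j
      funext k
      have b1 := hw k
      have b2 := hw' k
      by_cases hc : i = (ε k).1
      · simpa [Mε] using hj _ hc
      · by_cases hd : i = (π (ε k)).1
        · simpa [Mπ] using hj _ hd
        · simp only [hc, hd, or_self, if_false, Finset.mem_singleton] at b1 b2
          rw [b1, b2]
    · intro w _
      simp [sq_abs]

end
end

section
/- Lemma 3.3 (moments with estimated normalization at a single multipole). Let l ≥ 1, let 0 ≤ k ≤ l, and let q₀, q₁, q₁′, …, q_k, q_k′ be nonnegative integers with total degree n := q₀ + Σ_{j=1}^{k}(q_j + q_j′) even. Then E[ û_{l0}^{q₀} · ∏_{j=1}^{k} û_{lj}^{q_j} (conj(û_{lj}))^{q_j′} ] = g(l; n/2) · E[ u_{l0}^{q₀} · ∏_{j=1}^{k} u_{lj}^{q_j} (conj(u_{lj}))^{q_j′} ], where g(l;p) := ∏_{k=1}^{p} (2l+1)/(2l+2k−1). -/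
open MeasureTheory ProbabilityTheory

noncomputable section


/-- Factorial of an integer (the factorial of its nonnegative part). -/
def zfact (z : ℤ) : ℕ := Nat.factorial z.toNat

/-- The range `-l, ..., l` of projection quantum numbers for multipole `l`. -/
def mrange (l : ℕ) : Finset ℤ := Finset.Icc (-(l : ℤ)) l

/-- The Wigner 3j symbol, defined by the Racah factorial sum formula; it vanishes
unless `m₁ + m₂ + m₃ = 0`, `|mᵢ| ≤ lᵢ` and the triangle conditions hold. -/
def w3j (l₁ l₂ l₃ : ℕ) (m₁ m₂ m₃ : ℤ) : ℝ :=
  if m₁ + m₂ + m₃ = 0 ∧ m₁.natAbs ≤ l₁ ∧ m₂.natAbs ≤ l₂ ∧ m₃.natAbs ≤ l₃ ∧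
      l₃ ≤ l₁ + l₂ ∧ l₁ ≤ l₂ + l₃ ∧ l₂ ≤ l₁ + l₃ then
    (-1 : ℝ) ^ ((l₃ : ℤ) + m₃ + l₂ + m₂) *
    Real.sqrt (((zfact ((l₁ : ℤ) + l₂ - l₃) * zfact ((l₁ : ℤ) - l₂ + l₃) *
        zfact (-(l₁ : ℤ) + l₂ + l₃) : ℕ) : ℝ) / ((zfact ((l₁ : ℤ) + l₂ + l₃ + 1) : ℕ) : ℝ)) *
    Real.sqrt (((zfact ((l₃ : ℤ) + m₃) * zfact ((l₃ : ℤ) - m₃) : ℕ) : ℝ) /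
      ((zfact ((l₁ : ℤ) + m₁) * zfact ((l₁ : ℤ) - m₁) * zfact ((l₂ : ℤ) + m₂) *
        zfact ((l₂ : ℤ) - m₂) : ℕ) : ℝ)) *
    ∑ z ∈ Finset.range (l₁ + l₂ + l₃ + 1),
      if (l₂ : ℤ) + l₃ + m₁ - z ≥ 0 ∧ (l₁ : ℤ) - m₁ + z ≥ 0 ∧ (l₂ : ℤ) + l₃ - l₁ - z ≥ 0 ∧
          (l₃ : ℤ) + m₃ - z ≥ 0 ∧ (l₁ : ℤ) - l₂ - m₃ + z ≥ 0 then
        (-1 : ℝ) ^ z * ((zfact ((l₂ : ℤ) + l₃ + m₁ - z) * zfact ((l₁ : ℤ) - m₁ + z) : ℕ) : ℝ) /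
          ((Nat.factorial z * zfact ((l₂ : ℤ) + l₃ - l₁ - z) * zfact ((l₃ : ℤ) + m₃ - z) *
            zfact ((l₁ : ℤ) - l₂ - m₃ + z) : ℕ) : ℝ)
      else 0
  else 0

/-- Index set for the independent real Gaussian coordinates of the random spherical harmonic
coefficients: a triple `(l, m, b)` with `1 ≤ l`, `0 ≤ m ≤ l`, where `b` distinguishes real and
imaginary parts (only the real part is used when `m = 0`). -/
def GaussIx : Type := {q : ℕ × ℕ × Bool // 1 ≤ q.1 ∧ q.2.1 ≤ q.1 ∧ (q.2.1 = 0 → q.2.2 = false)}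

/-- The real Gaussian coordinate associated to an index. -/
def coordFn {Ω : Type*} (a : ℕ → ℤ → Ω → ℂ) (i : GaussIx) (ω : Ω) : ℝ :=
  if i.1.2.2 then (a i.1.1 (i.1.2.1 : ℤ) ω).im else (a i.1.1 (i.1.2.1 : ℤ) ω).re

/-- The variance of the Gaussian coordinate associated to an index:
`C l` for `a_{l0}`, and `C l / 2` for real and imaginary parts when `m ≠ 0`. -/
def coordVar (C : ℕ → ℝ) (i : GaussIx) : NNReal :=
  if i.1.2.1 = 0 then (C i.1.1).toNNReal else (C i.1.1 / 2).toNNReal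

/-- The Gaussian isotropic model for the random spherical harmonic coefficients `a_{lm}`,
with angular power spectrum `C`. -/
structure CMBModel {Ω : Type*} [MeasurableSpace Ω] (μ : Measure Ω) (C : ℕ → ℝ)
    (a : ℕ → ℤ → Ω → ℂ) : Prop where
  cPos : ∀ l, 1 ≤ l → 0 < C l
  aZeroReal : ∀ l, 1 ≤ l → ∀ ω, (a l 0 ω).im = 0
  aConj : ∀ l, 1 ≤ l → ∀ m : ℕ, 1 ≤ m → m ≤ l → ∀ ω,
    a l (-(m : ℤ)) ω = (-1 : ℂ) ^ m * (starRingEnd ℂ) (a l (m : ℤ) ω)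
  indep : iIndepFun (coordFn a) μ
  gauss : ∀ i : GaussIx, Measure.map (coordFn a i) μ = gaussianReal 0 (coordVar C i)

/-- The sample angle-averaged bispectrum. -/
def Bhat {Ω : Type*} (a : ℕ → ℤ → Ω → ℂ) (l₁ l₂ l₃ : ℕ) (ω : Ω) : ℂ :=
  ∑ m₁ ∈ mrange l₁, ∑ m₂ ∈ mrange l₂, ∑ m₃ ∈ mrange l₃,
    ((w3j l₁ l₂ l₃ m₁ m₂ m₃ : ℝ) : ℂ) * a l₁ m₁ ω * a l₂ m₂ ω * a l₃ m₃ ω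

/-- The normalized bispectrum (known angular power spectrum). -/
def Ibis {Ω : Type*} (C : ℕ → ℝ) (a : ℕ → ℤ → Ω → ℂ) (l₁ l₂ l₃ : ℕ) (ω : Ω) : ℝ :=
  (-1 : ℝ) ^ ((l₁ + l₂ + l₃) / 2) * (Bhat a l₁ l₂ l₃ ω).re /
    Real.sqrt (C l₁ * C l₂ * C l₃)

/-- The sample estimator of the angular power spectrum. -/
def Chat {Ω : Type*} (a : ℕ → ℤ → Ω → ℂ) (l : ℕ) (ω : Ω) : ℝ :=
  (2 * (l : ℝ) + 1)⁻¹ * ∑ m ∈ mrange l, Complex.normSq (a l m ω)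

/-- The feasible normalized bispectrum (estimated angular power spectrum). -/
def Ihat {Ω : Type*} (a : ℕ → ℤ → Ω → ℂ) (l₁ l₂ l₃ : ℕ) (ω : Ω) : ℝ :=
  (-1 : ℝ) ^ ((l₁ + l₂ + l₃) / 2) * (Bhat a l₁ l₂ l₃ ω).re /
    Real.sqrt (Chat a l₁ ω * Chat a l₂ ω * Chat a l₃ ω)

/-- The combinatorial factor `Δ_{l₁l₂l₃}` (for `l₁ ≤ l₂ ≤ l₃`). -/
def Delta (l₁ l₂ l₃ : ℕ) : ℝ :=
  if l₁ < l₂ ∧ l₂ < l₃ then 1 else if l₁ = l₂ ∧ l₂ = l₃ then 6 else 2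
/-- The correction factor `g(l;p) = ∏_{k=1}^p (2l+1)/(2l+2k-1)`. -/
def gfun (l p : ℕ) : ℝ := ∏ k ∈ Finset.Icc 1 p, (2 * (l : ℝ) + 1) / (2 * l + 2 * k - 1)

/-- The multiset `{l₁, l₂, l₃}` of the components of a triple. -/
def tripleMultiset (l : ℕ × ℕ × ℕ) : Multiset ℕ := {l.1, l.2.1, l.2.2}

/-- The correction factor `G[(l_{11},l_{12},l_{13}),…,(l_{I1},l_{I2},l_{I3}); p₁,…,p_I]`:
repeat each triple `2pᵢ` times, and take `∏_u g(ℓ̄_u ; #(u)/2)` over the distinct values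
`ℓ̄_u`, where `#(u)` is the multiplicity of `ℓ̄_u`. -/
def Gfactor {I : ℕ} (l : Fin I → ℕ × ℕ × ℕ) (p : Fin I → ℕ) : ℝ :=
  let M : Multiset ℕ := ∑ i : Fin I, (2 * p i) • tripleMultiset (l i)
  ∏ u ∈ M.toFinset, gfun u (M.count u / 2)

/-- The normalized coefficient `u_{lm} = a_{lm}/√C_l`. -/
def ufun {Ω : Type*} (C : ℕ → ℝ) (a : ℕ → ℤ → Ω → ℂ) (l : ℕ) (m : ℤ) (ω : Ω) : ℂ :=
  a l m ω / ((Real.sqrt (C l) : ℝ) : ℂ)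

/-- The feasibly normalized coefficient `û_{lm} = a_{lm}/√Ĉ_l`. -/
def uhat {Ω : Type*} (a : ℕ → ℤ → Ω → ℂ) (l : ℕ) (m : ℤ) (ω : Ω) : ℂ :=
  a l m ω / ((Real.sqrt (Chat a l ω) : ℝ) : ℂ)

lemma polar_aux {E : Type*} [NormedAddCommGroup E] [NormedSpace ℝ E] [MeasurableSpace E]
    [Nontrivial E] (μ : Measure E) [FiniteDimensional ℝ E] [BorelSpace E] [μ.IsAddHaarMeasure]
    (f : ℝ → ℂ) (G : E → ℂ) (hG : ∀ (r : ℝ) (x : E), 0 < r → G (r • x) = G x) :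
    ∫ x, G x * f ‖x‖ ∂μ = (∫ s : Metric.sphere (0 : E) 1, G s ∂μ.toSphere) *
      ∫ y in Set.Ioi (0 : ℝ), ((y ^ (Module.finrank ℝ E - 1) : ℝ) : ℂ) * f y :=
  calc
    ∫ x, G x * f (‖x‖) ∂μ = ∫ x : ({(0)}ᶜ : Set E), G x.1 * f (‖x.1‖) ∂(μ.comap (↑)) := by
      rw [integral_subtype_comap (measurableSet_singleton _).compl fun x ↦ G x * f (‖x‖),
        restrict_compl_singleton]
    _ = ∫ x, G x.1 * f x.2 ∂μ.toSphere.prod (.volumeIoiPow (Module.finrank ℝ E - 1)) := by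
      rw [← μ.measurePreserving_homeomorphUnitSphereProd.integral_comp
        (Homeomorph.measurableEmbedding _)]
      refine integral_congr_ae (.of_forall fun x => ?_)
      have hx : (x : E) ≠ 0 := x.2
      simp [hG _ _ (inv_pos.2 (norm_pos_iff.2 hx))]
    _ = _ := by
      rw [integral_prod_mul (fun s : Metric.sphere (0 : E) 1 => G s)
        (fun y : Set.Ioi (0 : ℝ) => f y)]
      congr 1
      simp only [Measure.volumeIoiPow, ENNReal.ofReal]
      rw [integral_withDensity_eq_integral_smul,
        integral_subtype_comap measurableSet_Ioi
          fun a ↦ Real.toNNReal (a ^ (Module.finrank ℝ E - 1)) • f a,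
        setIntegral_congr_fun measurableSet_Ioi fun x hx ↦ ?_]
      · beta_reduce
        rw [NNReal.smul_def, Real.coe_toNNReal _ (pow_nonneg hx.out.le _)]
        simp
      · exact (measurable_subtype_coe.pow_const _).real_toNNReal

lemma pi_gauss_density (ι : Type*) [Fintype ι] :
    Measure.pi (fun _ : ι => gaussianReal 0 1) =
      (volume : Measure (ι → ℝ)).withDensity
        (fun x => ENNReal.ofReal (∏ i, gaussianPDFReal 0 1 (x i))) := by
  refine Measure.pi_eq fun s hs => ?_
  rw [withDensity_apply _ (MeasurableSet.univ_pi hs), volume_pi, Measure.restrict_pi_pi,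
    ← ofReal_integral_eq_lintegral_ofReal, integral_fintype_prod_eq_prod,
    ENNReal.ofReal_prod_of_nonneg]
  · simp [gaussianReal_apply_eq_integral]
  · intro i _
    exact integral_nonneg fun x => gaussianPDFReal_nonneg _ _ _
  · exact Integrable.fintype_prod fun i => (integrable_gaussianPDFReal 0 1).restrict
  · exact .of_forall fun x => Finset.prod_nonneg fun i _ => gaussianPDFReal_nonneg _ _ _

lemma pi_gauss_integral (ι : Type*) [Fintype ι] : ∃ c : ℝ, ∀ H : (ι → ℝ) → ℂ,
    ∫ x, H x ∂(Measure.pi (fun _ : ι => gaussianReal 0 1)) =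
      c * ∫ x : EuclideanSpace ℝ ι, H x.ofLp * ((Real.exp (-(1/2) * ‖x‖ ^ (2:ℝ)) : ℝ) : ℂ) := by
  refine ⟨(√(2 * Real.pi))⁻¹ ^ (Fintype.card ι), fun H => ?_⟩
  rw [pi_gauss_density, integral_withDensity_eq_integral_toReal_smul
    (by fun_prop) (.of_forall fun x => ENNReal.ofReal_lt_top),
    ← (EuclideanSpace.volume_preserving_symm_measurableEquiv_toLp ι).integral_comp
      (MeasurableEquiv.measurableEmbedding _), ← integral_const_mul]
  refine integral_congr_ae (.of_forall fun x => ?_)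
  beta_reduce
  rw [ENNReal.toReal_ofReal (Finset.prod_nonneg fun i _ => gaussianPDFReal_nonneg _ _ _)]
  have : ∏ i, gaussianPDFReal 0 1 (x.ofLp i) =
      (√(2 * Real.pi))⁻¹ ^ (Fintype.card ι) * Real.exp (-(1/2) * ‖x‖ ^ (2:ℝ)) := by
    simp only [gaussianPDFReal_def, Finset.prod_mul_distrib]
    rw [← Real.exp_sum]
    simp [EuclideanSpace.norm_sq_eq, Finset.mul_sum]
    left; simp only [div_eq_inv_mul, mul_neg, Finset.sum_neg_distrib]
  change (∏ i, gaussianPDFReal 0 1 (x.ofLp i)) • H x.ofLp = _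
  rw [this]
  simp only [Complex.real_smul]
  push_cast
  ring

lemma radial_step (m : ℕ) :
    ∫ y in Set.Ioi (0:ℝ), y ^ (m + 2) * Real.exp (-(1/2) * y ^ (2:ℝ)) =
     (m + 1) * ∫ y in Set.Ioi (0:ℝ), y ^ m * Real.exp (-(1/2) * y ^ (2:ℝ)) := by
  have h := fun k : ℕ => integral_rpow_mul_exp_neg_mul_rpow (p := 2) (q := k) (b := 1/2) (by norm_num)
    (by have : (0:ℝ) ≤ k := k.cast_nonneg
        linarith) (by norm_num)
  simp only [Real.rpow_natCast] at h
  rw [h, h]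
  have h1 : (((m + 2 : ℕ) : ℝ) + 1) / 2 = ((m:ℝ) + 1) / 2 + 1 := by push_cast; ring
  have h2 : -(((m + 2 : ℕ) : ℝ) + 1) / 2 = -((m:ℝ) + 1) / 2 - 1 := by push_cast; ring
  rw [h1, h2, Real.Gamma_add_one (by positivity), Real.rpow_sub_one (by norm_num)]
  ring

lemma radial (l p : ℕ) :
    (2 * (l:ℝ) + 1) ^ p * ∫ y in Set.Ioi (0:ℝ), y ^ (2 * l) * Real.exp (-(1/2) * y ^ (2:ℝ)) =
     (∏ k ∈ Finset.Icc 1 p, (2 * (l : ℝ) + 1) / (2 * l + 2 * k - 1)) *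
      ∫ y in Set.Ioi (0:ℝ), y ^ (2 * l + 2 * p) * Real.exp (-(1/2) * y ^ (2:ℝ)) := by
  induction p with
  | zero => simp
  | succ p ih =>
    rw [Finset.prod_Icc_succ_top (by omega), show 2 * l + 2 * (p + 1) = (2 * l + 2 * p) + 2 by ring,
      radial_step, pow_succ, mul_right_comm, ih]
    have : 2 * (l:ℝ) + 2 * p + 1 ≠ 0 := by positivity
    have h2 : 2 * (l:ℝ) + 2 * ((p + 1 : ℕ):ℝ) - 1 = 2 * (l:ℝ) + 2 * p + 1 := by push_cast; ring
    rw [h2]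
    push_cast
    field_simp

lemma main_gauss {ι : Type*} [Fintype ι] [Nonempty ι] (l p : ℕ) (hc : Fintype.card ι = 2 * l + 1)
    (P : (ι → ℝ) → ℂ) (hP : ∀ (t : ℝ) x, P (t • x) = (t:ℂ) ^ (2 * p) * P x) :
    ∫ x, P ((√(2 * l + 1) / √(∑ i, x i ^ 2)) • x) ∂(Measure.pi (fun _ : ι => gaussianReal 0 1)) =
      ((∏ k ∈ Finset.Icc 1 p, (2 * (l : ℝ) + 1) / (2 * l + 2 * k - 1) : ℝ) : ℂ) *
      ∫ x, P x ∂(Measure.pi (fun _ : ι => gaussianReal 0 1)) := by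
  obtain ⟨c, hcc⟩ := pi_gauss_integral ι
  rw [hcc, hcc]
  set G : EuclideanSpace ℝ ι → ℂ := fun x => P (‖x‖⁻¹ • x.ofLp) with hGdef
  have hG : ∀ (r : ℝ) (x : EuclideanSpace ℝ ι), 0 < r → G (r • x) = G x := by
    intro r x hr
    simp only [hGdef, norm_smul, WithLp.ofLp_smul, smul_smul, Real.norm_of_nonneg hr.le]
    congr 2
    field_simp
  have h1 : ∀ x : EuclideanSpace ℝ ι, P x.ofLp = G x * (‖x‖ : ℂ) ^ (2 * p) := by
    intro x
    simp only [hGdef]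
    rw [mul_comm, ← hP, smul_smul]
    by_cases hx : x = 0
    · subst hx; simp
    · rw [mul_inv_cancel₀ (norm_ne_zero_iff.2 hx), one_smul]
  have h2 : ∀ x : EuclideanSpace ℝ ι, P ((√(2 * l + 1) / √(∑ i, x.ofLp i ^ 2)) • x.ofLp)
      = (2 * (l:ℂ) + 1) ^ p * G x := by
    intro x
    have : √(∑ i, x.ofLp i ^ 2) = ‖x‖ := by simp [EuclideanSpace.norm_eq]
    simp only [hGdef]
    rw [this, div_eq_mul_inv, ← smul_smul, hP, pow_mul]
    congr 2
    rw [← Complex.ofReal_pow, Real.sq_sqrt (by positivity)]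
    push_cast; rfl
  simp only [h2]
  simp only [h1, mul_assoc]
  rw [integral_const_mul]
  rw [polar_aux volume (fun y => ((Real.exp (-(1/2) * y ^ (2:ℝ)) : ℝ) : ℂ)) G hG,
    polar_aux volume (fun y => (y:ℂ) ^ (2 * p) * ((Real.exp (-(1/2) * y ^ (2:ℝ)) : ℝ) : ℂ)) G hG]
  simp only [finrank_euclideanSpace, hc, Nat.add_sub_cancel]
  have h3 := congrArg (fun t : ℝ => (t : ℂ)) (radial l p)
  simp only [Complex.ofReal_mul, ← integral_complex_ofReal, pow_add] at h3
  push_cast at h3 ⊢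
  simp only [← mul_assoc] at h3 ⊢
  linear_combination (c * ∫ s : Metric.sphere (0 : EuclideanSpace ℝ ι) 1, G s ∂volume.toSphere) * h3

lemma sum_mrange (l : ℕ) (f : ℤ → ℝ) :
    ∑ m ∈ mrange l, f m = f 0 + ∑ j : Fin l, (f ((j : ℕ) + 1) + f (-((j : ℕ) + 1))) := by
  unfold mrange
  rw [Fin.sum_univ_eq_sum_range (fun j : ℕ => f ((j : ℕ) + 1) + f (-((j : ℕ) + 1)))]
  induction l with
  | zero => simp
  | succ l ih =>
    have : Finset.Icc (-((l + 1 : ℕ) : ℤ)) ((l + 1 : ℕ) : ℤ) =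
        insert ((l : ℤ) + 1) (insert (-((l : ℤ) + 1)) (Finset.Icc (-(l : ℤ)) l)) := by
      ext x; simp only [Finset.mem_Icc, Finset.mem_insert]; omega
    rw [this, Finset.sum_insert, Finset.sum_insert, ih, Finset.sum_range_succ]
    · ring
    · simp
    · simp only [Finset.mem_Icc, Finset.mem_insert]; omega

def eIx (l : ℕ) (hl : 1 ≤ l) : Option (Fin l × Bool) → GaussIx
  | none => ⟨(l, 0, false), hl, Nat.zero_le _, fun _ => rfl⟩
  | some (j, b) => ⟨(l, j + 1, b), hl, j.2, fun h => absurd h (Nat.succ_ne_zero _)⟩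

lemma eIx_inj (l : ℕ) (hl : 1 ≤ l) : Function.Injective (eIx l hl) := by
  rintro (_ | ⟨j, b⟩) (_ | ⟨j', b'⟩) h <;> replace h := congrArg Subtype.val h
  · rfl
  · simp [eIx] at h
  · simp [eIx] at h
  · simp only [eIx, Prod.mk.injEq] at h
    have : j = j' := Fin.ext (by omega)
    simp [this, h.2.2]

def Uf (l : ℕ) (x : Option (Fin l × Bool) → ℝ) (j : ℕ) : ℂ :=
  if j = 0 then x none else if h : j - 1 < l then
    ((x (some (⟨j - 1, h⟩, false)) : ℂ) + (x (some (⟨j - 1, h⟩, true)) : ℂ) * Complex.I)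
      / (√2 : ℝ) else 0

lemma Uf_smul (l : ℕ) (t : ℝ) (x : Option (Fin l × Bool) → ℝ) (j : ℕ) :
    Uf l (t • x) j = t * Uf l x j := by
  unfold Uf
  split_ifs
  · simp
  · simp; ring
  · simp

lemma measurable_Uf (l j : ℕ) : Measurable fun x => Uf l x j := by
  unfold Uf
  split_ifs
  · fun_prop
  · fun_prop
  · fun_prop

def Pf (l k q₀ : ℕ) (q q' : ℕ → ℕ) (x : Option (Fin l × Bool) → ℝ) : ℂ :=
  (Uf l x 0) ^ q₀ * ∏ j ∈ Finset.Icc 1 k, (Uf l x j) ^ (q j) * ((starRingEnd ℂ) (Uf l x j)) ^ (q' j)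

lemma measurable_Pf (l k q₀ : ℕ) (q q' : ℕ → ℕ) : Measurable (Pf l k q₀ q q') := by
  unfold Pf
  refine ((measurable_Uf l 0).pow_const _).mul (Finset.measurable_prod _ fun j _ => ?_)
  exact ((measurable_Uf l j).pow_const _).mul
    ((Complex.continuous_conj.measurable.comp (measurable_Uf l j)).pow_const _)

lemma Pf_smul (l k q₀ : ℕ) (q q' : ℕ → ℕ) (t : ℝ) (x : Option (Fin l × Bool) → ℝ) :
    Pf l k q₀ q q' (t • x) =
      (t : ℂ) ^ (q₀ + ∑ j ∈ Finset.Icc 1 k, (q j + q' j)) * Pf l k q₀ q q' x := by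
  unfold Pf
  simp only [Uf_smul, map_mul, Complex.conj_ofReal, mul_pow, Finset.prod_mul_distrib, pow_add,
    ← Finset.prod_pow_eq_pow_sum]
  ring

def Xf {Ω : Type*} (C : ℕ → ℝ) (a : ℕ → ℤ → Ω → ℂ) (l : ℕ) (hl : 1 ≤ l)
    (i : Option (Fin l × Bool)) (ω : Ω) : ℝ :=
  coordFn a (eIx l hl i) ω / √(coordVar C (eIx l hl i) : ℝ)

section
variable {Ω : Type*} [MeasurableSpace Ω] {μ : Measure Ω} [IsProbabilityMeasure μ] {C : ℕ → ℝ}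
  {a : ℕ → ℤ → Ω → ℂ}

lemma coordVar_pos (hmod : CMBModel μ C a) (i : GaussIx) : 0 < coordVar C i := by
  have := hmod.cPos i.1.1 i.2.1
  unfold coordVar
  split_ifs <;> simp [this]

lemma coord_aem (hmod : CMBModel μ C a) (i : GaussIx) : AEMeasurable (coordFn a i) μ := by
  have : NeZero (μ.map (coordFn a i)) := by
    rw [hmod.gauss i]; infer_instance
  exact aemeasurable_of_map_neZero this

lemma Xf_aem (hmod : CMBModel μ C a) (l : ℕ) (hl : 1 ≤ l) (i) :
    AEMeasurable (Xf C a l hl i) μ := (coord_aem hmod _).div_const _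

lemma Xf_law (hmod : CMBModel μ C a) (l : ℕ) (hl : 1 ≤ l) :
    μ.map (fun ω i => Xf C a l hl i ω) = Measure.pi (fun _ => gaussianReal 0 1) := by
  have hind : iIndepFun (Xf C a l hl) μ :=
    (hmod.indep.precomp (eIx_inj l hl)).comp
      (fun i (y : ℝ) => y / √(coordVar C (eIx l hl i) : ℝ)) (fun i => by fun_prop)
  rw [(iIndepFun_iff_map_fun_eq_pi_map (Xf_aem hmod l hl)).1 hind]
  congr 1
  ext1 i
  have h : Xf C a l hl i =
    (fun y : ℝ => y / √(coordVar C (eIx l hl i) : ℝ)) ∘ coordFn a (eIx l hl i) := rfl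
  rw [h, ← AEMeasurable.map_map_of_aemeasurable (by fun_prop) (coord_aem hmod _), hmod.gauss,
    gaussianReal_map_div_const, zero_div]
  congr 1
  have hp := coordVar_pos hmod (eIx l hl i)
  ext
  simp only [NNReal.coe_div, NNReal.coe_mk, NNReal.coe_one]
  rw [Real.sq_sqrt (by positivity)]
  exact div_self (by positivity)

lemma Xf_none (hmod : CMBModel μ C a) (l : ℕ) (hl : 1 ≤ l) (ω : Ω) :
    (a l 0 ω).re = √(C l) * Xf C a l hl none ω := by
  have hC := hmod.cPos l hl
  have : 0 < √(C l) := Real.sqrt_pos.2 hC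
  simp only [Xf, eIx, coordFn, coordVar]
  simp [hC.le]
  field_simp

lemma Xf_re (hmod : CMBModel μ C a) (l : ℕ) (hl : 1 ≤ l) (j : Fin l) (ω : Ω) :
    (a l ((j : ℕ) + 1) ω).re = √(C l) * (Xf C a l hl (some (j, false)) ω / √2) := by
  have hC := hmod.cPos l hl
  have : 0 < √(C l) := Real.sqrt_pos.2 hC
  have h2 : 0 ≤ C l / 2 := by positivity
  simp only [Xf, eIx, coordFn, coordVar]
  simp [h2, hC.le]
  field_simp

lemma Xf_im (hmod : CMBModel μ C a) (l : ℕ) (hl : 1 ≤ l) (j : Fin l) (ω : Ω) :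
    (a l ((j : ℕ) + 1) ω).im = √(C l) * (Xf C a l hl (some (j, true)) ω / √2) := by
  have hC := hmod.cPos l hl
  have : 0 < √(C l) := Real.sqrt_pos.2 hC
  have h2 : 0 ≤ C l / 2 := by positivity
  simp only [Xf, eIx, coordFn, coordVar]
  simp [h2, hC.le]
  field_simp

lemma a_eq (hmod : CMBModel μ C a) (l : ℕ) (hl : 1 ≤ l) (j : ℕ) (hj : j ≤ l) (ω : Ω) :
    a l (j : ℤ) ω = (√(C l) : ℝ) * Uf l (fun i => Xf C a l hl i ω) j := by
  rcases j with _ | j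
  · apply Complex.ext
    · simp [Uf, Xf_none hmod l hl]
    · simp [Uf, hmod.aZeroReal l hl]
  · have h : j < l := hj
    have h1 := Xf_re hmod l hl ⟨j, h⟩ ω
    have h2 := Xf_im hmod l hl ⟨j, h⟩ ω
    simp only at h1 h2
    have e : ((j + 1 : ℕ) : ℤ) = (j : ℤ) + 1 := by push_cast; rfl
    rw [e, ← Complex.re_add_im (a l ((j : ℤ) + 1) ω), h1, h2]
    simp only [Uf, Nat.add_sub_cancel, h, dif_pos, Nat.succ_ne_zero, if_false]
    push_cast
    ring

lemma Chat_eq (hmod : CMBModel μ C a) (l : ℕ) (hl : 1 ≤ l) (ω : Ω) :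
    Chat a l ω = C l * ((∑ i, (Xf C a l hl i ω) ^ 2) / (2 * l + 1)) := by
  have hC := hmod.cPos l hl
  have hs : √(C l) ^ 2 = C l := Real.sq_sqrt hC.le
  have h2 : √(2:ℝ) ^ 2 = 2 := Real.sq_sqrt (by norm_num)
  unfold Chat
  rw [sum_mrange l (fun m => Complex.normSq (a l m ω)), Fintype.sum_option, Fintype.sum_prod_type]
  have h0 : Complex.normSq (a l 0 ω) = C l * Xf C a l hl none ω ^ 2 := by
    rw [Complex.normSq_apply, hmod.aZeroReal l hl, Xf_none hmod l hl]
    linear_combination (Xf C a l hl none ω ^ 2) * hs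
  have hj : ∀ j : Fin l, Complex.normSq (a l ((j : ℕ) + 1) ω) +
      Complex.normSq (a l (-((j : ℕ) + 1)) ω) =
      C l * ∑ b, Xf C a l hl (some (j, b)) ω ^ 2 := by
    intro j
    have hc := hmod.aConj l hl (j + 1) (by omega) j.2 ω
    push_cast at hc
    rw [hc]
    simp only [map_mul, map_pow, Complex.normSq_neg, Complex.normSq_one, one_pow, one_mul,
      Complex.normSq_conj]
    rw [Complex.normSq_apply, Xf_re hmod l hl, Xf_im hmod l hl, Fintype.sum_bool]
    have e : ∀ z w : ℝ, √(C l) * (z / √2) * (√(C l) * (z / √2)) = C l * z ^ 2 / 2 := by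
      intro z _
      rw [show √(C l) * (z / √2) * (√(C l) * (z / √2)) = √(C l) ^ 2 * z ^ 2 / √2 ^ 2 by
        field_simp, hs, h2]
    rw [e _ 0, e _ 0]
    ring
  simp only [hj, h0, ← Finset.mul_sum]
  field_simp

lemma ufun_eq (hmod : CMBModel μ C a) (l : ℕ) (hl : 1 ≤ l) (j : ℕ) (hj : j ≤ l) (ω : Ω) :
    ufun C a l (j : ℤ) ω = Uf l (fun i => Xf C a l hl i ω) j := by
  have hC : ((√(C l) : ℝ) : ℂ) ≠ 0 := by
    exact_mod_cast (Real.sqrt_pos.2 (hmod.cPos l hl)).ne'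
  rw [ufun, a_eq hmod l hl j hj]
  field_simp

lemma uhat_eq (hmod : CMBModel μ C a) (l : ℕ) (hl : 1 ≤ l) (j : ℕ) (hj : j ≤ l) (ω : Ω) :
    uhat a l (j : ℤ) ω = Uf l ((√(2 * l + 1) / √(∑ i, (Xf C a l hl i ω) ^ 2)) •
      (fun i => Xf C a l hl i ω)) j := by
  have hC : ((√(C l) : ℝ) : ℂ) ≠ 0 := by
    exact_mod_cast (Real.sqrt_pos.2 (hmod.cPos l hl)).ne'
  rw [uhat, a_eq hmod l hl j hj, Chat_eq hmod l hl, Uf_smul, Real.sqrt_mul (hmod.cPos l hl).le,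
    Real.sqrt_div (Finset.sum_nonneg fun i _ => sq_nonneg _)]
  push_cast
  rw [mul_div_mul_left _ _ hC, div_div_eq_mul_div]
  ring

end

/-- **Lemma 3.3** (moments with estimated normalization at a single multipole). For a single
multipole `l` and exponents `q₀, q₁, q₁', …, q_k, q_k'` with even total degree `n`,
`E[û_{l0}^{q₀} ∏_j û_{lj}^{q_j} (û_{lj}^*)^{q_j'}] = g(l; n/2) ·
E[u_{l0}^{q₀} ∏_j u_{lj}^{q_j} (u_{lj}^*)^{q_j'}]`. -/
theorem lemma_3_3 (Ω : Type) (_ : MeasurableSpace Ω) (μ : Measure Ω)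
    [IsProbabilityMeasure μ] (C : ℕ → ℝ) (a : ℕ → ℤ → Ω → ℂ) (hmod : CMBModel μ C a)
    (l k : ℕ) (hl : 1 ≤ l) (hk : k ≤ l) (q₀ : ℕ) (q q' : ℕ → ℕ)
    (heven : Even (q₀ + ∑ j ∈ Finset.Icc 1 k, (q j + q' j))) :
    (∫ ω, (uhat a l 0 ω) ^ q₀ *
        ∏ j ∈ Finset.Icc 1 k,
          (uhat a l (j : ℤ) ω) ^ (q j) * ((starRingEnd ℂ) (uhat a l (j : ℤ) ω)) ^ (q' j) ∂μ) =
      ((gfun l ((q₀ + ∑ j ∈ Finset.Icc 1 k, (q j + q' j)) / 2) : ℝ) : ℂ) *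
        ∫ ω, (ufun C a l 0 ω) ^ q₀ *
          ∏ j ∈ Finset.Icc 1 k,
            (ufun C a l (j : ℤ) ω) ^ (q j) *
              ((starRingEnd ℂ) (ufun C a l (j : ℤ) ω)) ^ (q' j) ∂μ := by
  have hn : ((q₀ + ∑ j ∈ Finset.Icc 1 k, (q j + q' j)) / 2) * 2 =
      q₀ + ∑ j ∈ Finset.Icc 1 k, (q j + q' j) := Nat.div_mul_cancel heven.two_dvd
  have hm := main_gauss l ((q₀ + ∑ j ∈ Finset.Icc 1 k, (q j + q' j)) / 2) (by simp; ring)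
    (Pf l k q₀ q q') (by
      intro t x
      rw [Pf_smul, mul_comm 2, hn])
  have hX : AEMeasurable (fun ω i => Xf C a l hl i ω) μ :=
    aemeasurable_pi_lambda _ (Xf_aem hmod l hl)
  rw [← Xf_law hmod l hl, integral_map hX, integral_map hX] at hm
  · unfold gfun
    convert hm using 2
    · ext ω
      unfold Pf
      have h0 := uhat_eq hmod l hl 0 (Nat.zero_le _) ω
      rw [Nat.cast_zero] at h0
      rw [h0]
      congr 1
      refine Finset.prod_congr rfl fun j hj => ?_
      rw [uhat_eq hmod l hl j ((Finset.mem_Icc.1 hj).2.trans hk)]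
    · congr 1
      ext ω
      unfold Pf
      have h0 := ufun_eq hmod l hl 0 (Nat.zero_le _) ω
      rw [Nat.cast_zero] at h0
      rw [h0]
      congr 1
      refine Finset.prod_congr rfl fun j hj => ?_
      rw [ufun_eq hmod l hl j ((Finset.mem_Icc.1 hj).2.trans hk)]
  · exact (measurable_Pf l k q₀ q q').aestronglyMeasurable
  · refine Measurable.aestronglyMeasurable ((measurable_Pf l k q₀ q q').comp ?_)
    fun_prop

end
end
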